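/- Let e = (1/2)(1 + s) (the symmetrizing operator on ℂ[X]), and define the ℂ-linear endomorphisms of ℂ[X]: U = (1/2)·e ∘ x² ∘ e, V = −(1/2)·e ∘ T² ∘ e, and W = e ∘ x ∘ T ∘ e. Then W ∘ W − (1 + 2c)·W = −4·U ∘ V, U ∘ V − V ∘ U = W + (1/2 − c)·e, V ∘ W − W ∘ V = 2·V, and U ∘ W − W ∘ U = −2·U. (These are the defining relations of the spherical subalgebra B_{1,c} = e·H_{1,c}·e of type A₁, realized in the Dunkl representation.) -/

import Mathlib

/-!
The operators `s`, `x`, `T` satisfy the relations of the rational Cherednik algebra `H_{1,c}`: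
`s² = 1`, `s x = -x s`, `s T = -T s` and `T x = x T + 1 - 2 c s`. The spherical relations hold in
any algebra with such elements. Since `s` commutes with `x²`, `T²` and `x T`, these three commute
with `e`, so multiplying `x² e`, `T² e` and `x T e` amounts to multiplying `x²`, `T²` and `x T`.
Each relation thus comes from reordering one product in `H_{1,c}` and replacing `s e` by `e`.
-/

open Polynomial

/-- The involution `s` of `ℂ[X]` determined by `X ↦ -X`. -/
noncomputable def cherednikS (f : Polynomial ℂ) : Polynomial ℂ := f.comp (-X)

/-- The one-variable Dunkl operator `T f = f' + c g`, where `g` is the unique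
polynomial with `X g = s(f) - f`. -/
noncomputable def cherednikT (c : ℂ) (f : Polynomial ℂ) : Polynomial ℂ :=
  derivative f + C c * ((cherednikS f - f) /ₘ X)

/-- The multiplication operator `x : f ↦ X f` on `ℂ[X]`. -/
noncomputable def cherednikX (f : Polynomial ℂ) : Polynomial ℂ := X * f

/-- The symmetrizer `e = (1/2)(1 + s)` on `ℂ[X]`. -/
noncomputable def cherednikE (f : Polynomial ℂ) : Polynomial ℂ :=
  (1/2 : ℂ) • (f + cherednikS f)

/-- The relations of the rational Cherednik algebra `H_{1,c}` of type `A₁`, for a reflection `s`,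
a coordinate `x` and a Dunkl operator `y` in a `k`-algebra. `SemiconjBy s x (-x)` is the relation
`s x = -x s`. -/
structure CherednikRelations {k A : Type*} [CommRing k] [Ring A] [Algebra k A]
    (c : k) (s x y : A) : Prop where
  s_mul_s : s * s = 1
  semiconjBy_x : SemiconjBy s x (-x)
  semiconjBy_y : SemiconjBy s y (-y)
  y_mul_x : y * x = x * y + 1 - (2 * c) • s

namespace CherednikRelations

variable {k A : Type*} [CommRing k] [Ring A] [Algebra k A] {c : k} {s x y : A}

lemma y_mul_x_mul_x (h : CherednikRelations c s x y) :
    y * (x * x) = x * x * y + (2 : k) • x := by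
  calc y * (x * x) = y * x * x := by rw [mul_assoc]
    _ = x * (y * x) + x - (2 * c) • (s * x) := by
      nth_rw 1 [h.y_mul_x]
      rw [sub_mul, add_mul, one_mul, smul_mul_assoc, mul_assoc]
    _ = x * x * y + (2 : k) • x := by
      rw [h.y_mul_x, h.semiconjBy_x.eq, mul_sub, mul_add, mul_one, mul_smul_comm, neg_mul,
        ← mul_assoc]
      module

lemma y_mul_y_mul_x (h : CherednikRelations c s x y) :
    y * y * x = x * (y * y) + (2 : k) • y := by
  calc y * y * x = y * (y * x) := mul_assoc ..
    _ = y * x * y + y - (2 * c) • (y * s) := by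
      nth_rw 1 [h.y_mul_x]
      rw [mul_sub, mul_add, mul_one, mul_smul_comm, ← mul_assoc]
    _ = x * (y * y) + (2 : k) • y := by
      rw [h.y_mul_x, sub_mul, add_mul, one_mul, smul_mul_assoc, h.semiconjBy_y.eq, neg_mul,
        mul_assoc]
      module

lemma x_mul_y_mul_self (h : CherednikRelations c s x y) :
    x * y * (x * y) = x * x * (y * y) + x * y + (2 * c) • (x * y * s) := by
  calc x * y * (x * y) = x * (y * x) * y := by simp only [mul_assoc]
    _ = x * x * (y * y) + x * y - (2 * c) • (x * (s * y)) := by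
      rw [h.y_mul_x]
      simp only [mul_add, mul_sub, add_mul, sub_mul, mul_one, mul_smul_comm, smul_mul_assoc,
        mul_assoc]
    _ = x * x * (y * y) + x * y + (2 * c) • (x * y * s) := by
      rw [h.semiconjBy_y.eq, neg_mul, mul_neg, smul_neg, sub_neg_eq_add, mul_assoc x y s]

lemma y_mul_y_mul_x_mul_x (h : CherednikRelations c s x y) :
    y * y * (x * x) =
      x * x * (y * y) + (4 : k) • (x * y) + (2 : k) • 1 - (4 * c) • s := by
  calc y * y * (x * x) = y * (y * (x * x)) := mul_assoc ..
    _ = y * (x * x) * y + (2 : k) • (y * x) := by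
      rw [h.y_mul_x_mul_x, mul_add, mul_smul_comm, ← mul_assoc, h.y_mul_x_mul_x]
    _ = x * x * (y * y) + (2 : k) • (x * y) + (2 : k) • (y * x) := by
      rw [h.y_mul_x_mul_x, add_mul, smul_mul_assoc, mul_assoc (x * x)]
    _ = x * x * (y * y) + (4 : k) • (x * y) + (2 : k) • 1 - (4 * c) • s := by
      rw [h.y_mul_x]
      module

lemma y_mul_y_mul_x_mul_y (h : CherednikRelations c s x y) :
    y * y * (x * y) = x * y * (y * y) + (2 : k) • (y * y) := by
  rw [← mul_assoc (y * y), h.y_mul_y_mul_x, add_mul, smul_mul_assoc]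
  simp only [mul_assoc]

lemma x_mul_y_mul_x_mul_x (h : CherednikRelations c s x y) :
    x * y * (x * x) = x * x * (x * y) + (2 : k) • (x * x) := by
  rw [mul_assoc x, h.y_mul_x_mul_x, mul_add, mul_smul_comm]
  simp only [mul_assoc]

end CherednikRelations

section Symmetrizer

/-- The symmetrizing element `e = (1 / 2)(1 + s)` attached to an element `s` of a `k`-algebra. -/
def symmetrizer (k : Type*) {A : Type*} [Field k] [Ring A] [Algebra k A] (s : A) : A :=
  (1 / 2 : k) • (1 + s)

variable {k A : Type*} [Field k] [Ring A] [Algebra k A] {s : A}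

lemma commute_symmetrizer {z : A} (hz : Commute s z) : Commute (symmetrizer k s) z :=
  ((Commute.one_left z).add_left hz).smul_left _

lemma self_mul_symmetrizer (hs : s * s = 1) : s * symmetrizer k s = symmetrizer k s := by
  rw [symmetrizer, mul_smul_comm, mul_add, mul_one, hs, add_comm]

lemma isIdempotentElem_symmetrizer [NeZero (2 : k)] (hs : s * s = 1) :
    IsIdempotentElem (symmetrizer k s) := by
  calc symmetrizer k s * symmetrizer k s
      = (1 / 2 : k) • (symmetrizer k s + s * symmetrizer k s) := by
        nth_rw 1 [symmetrizer]
        rw [smul_mul_assoc, add_mul, one_mul]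
    _ = symmetrizer k s := by
        rw [self_mul_symmetrizer hs, ← two_smul k, smul_smul, one_div_mul_cancel two_ne_zero,
          one_smul]

end Symmetrizer

section IdempotentCompression

variable {M : Type*} [Semigroup M] {e b : M}

lemma mul_mul_self_of_isIdempotentElem_of_commute (he : IsIdempotentElem e) (hb : Commute e b) :
    e * b * e = b * e := by
  rw [hb.eq, mul_assoc, he.eq]

lemma mul_mul_mul_of_isIdempotentElem_of_commute (he : IsIdempotentElem e) (hb : Commute e b)
    (a : M) : a * e * (b * e) = a * b * e := by
  rw [mul_assoc, ← mul_assoc e, mul_mul_self_of_isIdempotentElem_of_commute he hb, ← mul_assoc]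

end IdempotentCompression

lemma commute_mul_of_semiconjBy_neg {M : Type*} [Semigroup M] [HasDistribNeg M] {s a b : M}
    (ha : SemiconjBy s a (-a)) (hb : SemiconjBy s b (-b)) : Commute s (a * b) :=
  neg_mul_neg a b ▸ ha.mul_right hb

theorem spherical_relations_A1_general {k A : Type*} [Field k] [NeZero (2 : k)] [Ring A]
    [Algebra k A] {c : k} {s x y e u v w : A} (h : CherednikRelations c s x y)
    (he : e = symmetrizer k s) (hu : u = (1 / 2 : k) • (e * (x * x) * e))
    (hv : v = (-(1 / 2) : k) • (e * (y * y) * e)) (hw : w = e * (x * y) * e) :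
    w * w - (1 + 2 * c) • w = (-4 : k) • (u * v) ∧
    u * v - v * u = w + (1 / 2 - c) • e ∧
    v * w - w * v = (2 : k) • v ∧
    u * w - w * u = (-2 : k) • u := by
  have idem : IsIdempotentElem e := he ▸ isIdempotentElem_symmetrizer h.s_mul_s
  have s_mul_e : s * e = e := he ▸ self_mul_symmetrizer h.s_mul_s
  have comm {a b : A} (ha : SemiconjBy s a (-a)) (hb : SemiconjBy s b (-b)) :
      Commute e (a * b) :=
    he ▸ commute_symmetrizer (commute_mul_of_semiconjBy_neg ha hb)
  have comm_xx := comm h.semiconjBy_x h.semiconjBy_x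
  have comm_yy := comm h.semiconjBy_y h.semiconjBy_y
  have comm_xy := comm h.semiconjBy_x h.semiconjBy_y
  rw [mul_mul_self_of_isIdempotentElem_of_commute idem comm_xx] at hu
  rw [mul_mul_self_of_isIdempotentElem_of_commute idem comm_yy] at hv
  rw [mul_mul_self_of_isIdempotentElem_of_commute idem comm_xy] at hw
  have mul_xx := mul_mul_mul_of_isIdempotentElem_of_commute idem comm_xx
  have mul_yy := mul_mul_mul_of_isIdempotentElem_of_commute idem comm_yy
  have mul_xy := mul_mul_mul_of_isIdempotentElem_of_commute idem comm_xy
  have two_ne : (2 : k) ≠ 0 := two_ne_zero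
  subst hu hv hw
  simp only [smul_mul_assoc, mul_smul_comm, mul_xx, mul_yy, mul_xy]
  refine ⟨?_, ?_, ?_, ?_⟩
  · rw [h.x_mul_y_mul_self, add_mul, add_mul, smul_mul_assoc, mul_assoc _ s, s_mul_e]
    match_scalars <;> grind
  · rw [h.y_mul_y_mul_x_mul_x, sub_mul, add_mul, add_mul]
    simp only [smul_mul_assoc, one_mul, s_mul_e]
    match_scalars <;> grind
  · rw [h.y_mul_y_mul_x_mul_y, add_mul, smul_mul_assoc]
    match_scalars <;> grind
  · rw [h.x_mul_y_mul_x_mul_x, add_mul, smul_mul_assoc]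
    match_scalars <;> grind

section DunklRepresentation

lemma cherednikS_X : cherednikS X = -X := X_comp

lemma cherednikS_add (f g : ℂ[X]) : cherednikS (f + g) = cherednikS f + cherednikS g := add_comp

lemma cherednikS_sub (f g : ℂ[X]) : cherednikS (f - g) = cherednikS f - cherednikS g := sub_comp

lemma cherednikS_mul (f g : ℂ[X]) : cherednikS (f * g) = cherednikS f * cherednikS g :=
  mul_comp ..

lemma cherednikS_C (a : ℂ) : cherednikS (C a) = C a := C_comp

lemma cherednikS_cherednikS (f : ℂ[X]) : cherednikS (cherednikS f) = f := by
  simp [cherednikS, comp_assoc]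

lemma derivative_cherednikS (f : ℂ[X]) :
    derivative (cherednikS f) = -cherednikS (derivative f) := by
  simp [cherednikS, derivative_comp]

lemma X_dvd_cherednikS_sub (f : ℂ[X]) : X ∣ cherednikS f - f := by
  simp [X_dvd_iff, coeff_zero_eq_eval_zero, cherednikS]

lemma X_mul_cherednikT (c : ℂ) (f : ℂ[X]) :
    X * cherednikT c f = X * derivative f + C c * (cherednikS f - f) := by
  have cancel : X * ((cherednikS f - f) /ₘ X) = cherednikS f - f := by
    obtain ⟨q, hq⟩ := X_dvd_cherednikS_sub f
    rw [hq, mul_divByMonic_cancel_left q monic_X]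
  rw [cherednikT, mul_add, mul_left_comm, cancel]

/-- The involution `s` as a linear operator. -/
noncomputable def cherednikSEnd : Module.End ℂ ℂ[X] where
  toFun := cherednikS
  map_add' := cherednikS_add
  map_smul' _ _ := smul_comp ..

/-- The Dunkl operator `T` as a linear operator. -/
noncomputable def cherednikTEnd (c : ℂ) : Module.End ℂ ℂ[X] where
  toFun := cherednikT c
  map_add' f g := mul_left_cancel₀ X_ne_zero <| by
    simp only [mul_add, X_mul_cherednikT, cherednikS_add, derivative_add]
    ring
  map_smul' a f := mul_left_cancel₀ X_ne_zero <| by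
    simp only [RingHom.id_apply, smul_eq_C_mul, mul_left_comm X (C a), X_mul_cherednikT,
      cherednikS_mul, cherednikS_C, derivative_C_mul]
    ring

lemma cherednikS_cherednikT (c : ℂ) (f : ℂ[X]) :
    cherednikS (cherednikT c f) = -cherednikT c (cherednikS f) := by
  have reflected := congrArg cherednikS (X_mul_cherednikT c f)
  simp only [cherednikS_mul, cherednikS_add, cherednikS_sub, cherednikS_X, cherednikS_C,
    cherednikS_cherednikS] at reflected
  refine mul_left_cancel₀ X_ne_zero ?_
  rw [mul_neg, X_mul_cherednikT, derivative_cherednikS, cherednikS_cherednikS]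
  linear_combination -reflected

lemma cherednikT_X_mul (c : ℂ) (f : ℂ[X]) :
    cherednikT c (X * f) = X * cherednikT c f + f - (2 * c) • cherednikS f := by
  refine mul_left_cancel₀ X_ne_zero ?_
  rw [X_mul_cherednikT, derivative_mul, derivative_X, cherednikS_mul, cherednikS_X,
    smul_eq_C_mul, C_mul, C_ofNat]
  linear_combination -X * X_mul_cherednikT c f

theorem cherednikRelations_dunkl (c : ℂ) :
    CherednikRelations c cherednikSEnd (LinearMap.mulLeft ℂ (X : ℂ[X])) (cherednikTEnd c) where
  s_mul_s := LinearMap.ext cherednikS_cherednikS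
  semiconjBy_x := LinearMap.ext fun f ↦ by
    change cherednikS (X * f) = -(X * cherednikS f)
    rw [cherednikS_mul, cherednikS_X, neg_mul]
  semiconjBy_y := LinearMap.ext (cherednikS_cherednikT c)
  y_mul_x := LinearMap.ext (cherednikT_X_mul c)

end DunklRepresentation

/-- The defining relations of the spherical subalgebra `B_{1,c} = e H_{1,c} e`
of type `A₁`, realized in the Dunkl representation: with
`U = (1/2) e x² e`, `V = -(1/2) e T² e`, `W = e x T e`, one has
`W² - (1+2c) W = -4 U V`, `[U,V] = W + (1/2 - c) e`, `[V,W] = 2V`, `[U,W] = -2U`. -/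
theorem spherical_relations_A1 (c : ℂ)
    (U V W : Polynomial ℂ → Polynomial ℂ)
    (hU : U = (1/2 : ℂ) • (cherednikE ∘ cherednikX ∘ cherednikX ∘ cherednikE))
    (hV : V = (-(1/2) : ℂ) • (cherednikE ∘ cherednikT c ∘ cherednikT c ∘ cherednikE))
    (hW : W = cherednikE ∘ cherednikX ∘ cherednikT c ∘ cherednikE) :
    W ∘ W - ((1 : ℂ) + 2 * c) • W = (-(4 : ℂ)) • (U ∘ V) ∧
    U ∘ V - V ∘ U = W + ((1/2 : ℂ) - c) • cherednikE ∧
    V ∘ W - W ∘ V = (2 : ℂ) • V ∧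
    U ∘ W - W ∘ U = (-(2 : ℂ)) • U := by
  subst hU hV hW
  obtain ⟨ww, uv, vw, uw⟩ :=
    spherical_relations_A1_general (cherednikRelations_dunkl c) rfl rfl rfl rfl
  exact ⟨congrArg DFunLike.coe ww, congrArg DFunLike.coe uv,
    congrArg DFunLike.coe vw, congrArg DFunLike.coe uw⟩
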